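/- arXiv:2201.03854 — 2 statements merged into one kernel-verified Lean document; each statement's English description precedes it below -/
import Mathlib

section
/- Assume the bracket [·,·] satisfies the Jacobi identity, so that 𝔤 is a Lie algebra. Then J is Kähler, i.e. both dω(E,F,G) = 0 for all E, F, G ∈ 𝔤 and N(E,F) = 0 for all E, F ∈ 𝔤, if and only if 2z₁ − z₄ − w₂ = 0, 2z₂ + z₃ + w₁ = 0, θ₁ = 2a and θ₂ = −2α. -/
noncomputable section

/-- The bilinear antisymmetric bracket on ℝ⁴ determined by the structure constants. -/
def bk (lam α β a b r z₁ z₂ z₃ z₄ w₁ w₂ θ₁ θ₂ : ℝ) (E F : Fin 4 → ℝ) : Fin 4 → ℝ :=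
  (E 0 * F 1 - E 1 * F 0) • (![-r, 0, -θ₁, -θ₂] : Fin 4 → ℝ) +
  (E 0 * F 2 - E 2 * F 0) • (![-α, -β, -z₁, -w₁] : Fin 4 → ℝ) +
  (E 0 * F 3 - E 3 * F 0) • (![-a, -b, -z₃, z₁] : Fin 4 → ℝ) +
  (E 1 * F 2 - E 2 * F 1) • (![β, -α, -z₂, -w₂] : Fin 4 → ℝ) +
  (E 1 * F 3 - E 3 * F 1) • (![b, -a, -z₄, z₂] : Fin 4 → ℝ) +
  (E 2 * F 3 - E 3 * F 2) • (![0, 0, 0, -lam] : Fin 4 → ℝ)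

/-- The almost Hermitian structure J with J(X)=Y, J(Y)=-X, J(Z)=W, J(W)=-Z. -/
def Jm (E : Fin 4 → ℝ) : Fin 4 → ℝ := ![-E 1, E 0, -E 3, E 2]

/-- The standard inner product, making {X,Y,Z,W} orthonormal. -/
def ip (E F : Fin 4 → ℝ) : ℝ := E 0 * F 0 + E 1 * F 1 + E 2 * F 2 + E 3 * F 3

/-- The Kähler form ω(E,F) = ⟨JE, F⟩. -/
def om (E F : Fin 4 → ℝ) : ℝ := ip (Jm E) F

/-- The left-invariant exterior derivative of the Kähler form. -/
def dom (lam α β a b r z₁ z₂ z₃ z₄ w₁ w₂ θ₁ θ₂ : ℝ) (E F G : Fin 4 → ℝ) : ℝ :=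
  -om (bk lam α β a b r z₁ z₂ z₃ z₄ w₁ w₂ θ₁ θ₂ E F) G - om (bk lam α β a b r z₁ z₂ z₃ z₄ w₁ w₂ θ₁ θ₂ F G) E - om (bk lam α β a b r z₁ z₂ z₃ z₄ w₁ w₂ θ₁ θ₂ G E) F

/-- The Nijenhuis tensor of J. -/
def NT (lam α β a b r z₁ z₂ z₃ z₄ w₁ w₂ θ₁ θ₂ : ℝ) (E F : Fin 4 → ℝ) : Fin 4 → ℝ :=
  bk lam α β a b r z₁ z₂ z₃ z₄ w₁ w₂ θ₁ θ₂ E F + Jm (bk lam α β a b r z₁ z₂ z₃ z₄ w₁ w₂ θ₁ θ₂ (Jm E) F) + Jm (bk lam α β a b r z₁ z₂ z₃ z₄ w₁ w₂ θ₁ θ₂ E (Jm F)) -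
    bk lam α β a b r z₁ z₂ z₃ z₄ w₁ w₂ θ₁ θ₂ (Jm E) (Jm F)

/-! An alternating `n`-form on an `(n + 1)`-dimensional space is determined by its values on a basis
with one vector left out, so `dω` has four components. Those leaving out `X` or `Y` vanish
identically, and the other two are `θ₁ - 2a` and `-(θ₂ + 2α)`. The Nijenhuis tensor is alternating
and `J`-antilinear, so on a space spanned by `X, JX, Z, JZ` it is determined by `N(X, Z)`, whose
components along `X` and `Y` vanish identically and whose components along `Z` and `W` are
`-(2z₁ - z₄ - w₂)` and `-(2z₂ + z₃ + w₁)`. -/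

section General

variable {R M N : Type*} [CommRing R] [AddCommGroup M] [Module R M] [AddCommGroup N] [Module R N]

theorem alternatingMap_eq_zero_iff_succAbove {n : ℕ} (e : Module.Basis (Fin (n + 1)) R M)
    (f : M [⋀^Fin n]→ₗ[R] N) : f = 0 ↔ ∀ p : Fin (n + 1), f (e ∘ p.succAbove) = 0 := by
  refine ⟨fun hf p => by simp [hf], fun h => e.ext_alternating fun v hv => ?_⟩
  obtain ⟨p, hp⟩ : ∃ p, ∀ i, v i ≠ p := by
    have hsurj : ¬ Function.Surjective v := fun hs => by
      simpa using Fintype.card_le_of_surjective v hs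
    simpa [Function.Surjective] using hsurj
  choose σ hσ using fun i => Fin.exists_succAbove_eq (hp i)
  have hσ_inj : Function.Injective σ := fun i j hij => hv (by rw [← hσ i, ← hσ j, hij])
  let τ : Equiv.Perm (Fin n) := Equiv.ofBijective σ (Finite.injective_iff_bijective.1 hσ_inj)
  have hv_eq : (fun i => e (v i)) = (e ∘ p.succAbove) ∘ τ := funext fun i => congrArg e (hσ i).symm
  rw [hv_eq, f.map_perm, h p, smul_zero, AlternatingMap.zero_apply]

theorem eq_zero_iff_of_isAlt_of_semiconj {J : Module.End R M} {K : Module.End R N}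
    {T : M →ₗ[R] M →ₗ[R] N} (hT : T.IsAlt) (hJ : ∀ x y, T (J x) y = K (T x y)) {x y : M}
    (hspan : Submodule.span R {x, J x, y, J y} = ⊤) : T = 0 ↔ T x y = 0 := by
  refine ⟨fun h => by simp [h], fun hxy => ?_⟩
  have hJ_right (u v : M) : T u (J v) = K (T u v) := by rw [← hT.neg, hJ, ← map_neg, hT.neg]
  have hx : T x = 0 := by
    refine LinearMap.ext_on hspan ?_
    rintro _ (rfl | rfl | rfl | rfl) <;> simp [hJ_right, hT.self_eq_zero, hxy]
  have hy : T y = 0 := by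
    have hyx : T y x = 0 := by rw [← hT.neg, hxy, neg_zero]
    refine LinearMap.ext_on hspan ?_
    rintro _ (rfl | rfl | rfl | rfl) <;> simp [hJ_right, hT.self_eq_zero, hyx]
  refine LinearMap.ext_on hspan ?_
  rintro _ (rfl | rfl | rfl | rfl) <;> ext v <;> simp [hJ, hx, hy]

/-- The exterior derivative of a left-invariant `2`-form `ω`, as an alternating `3`-form; the
alternating map `B` plays the role of the Lie bracket. -/
def lieExtDeriv (B : M →ₗ[R] M →ₗ[R] M) (hB : B.IsAlt) (ω : M →ₗ[R] M →ₗ[R] N) :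
    M [⋀^Fin 3]→ₗ[R] N where
  toMultilinearMap := .mk'
    (fun v => -ω (B (v 0) (v 1)) (v 2) - ω (B (v 1) (v 2)) (v 0) - ω (B (v 2) (v 0)) (v 1))
    (fun v i x y => by fin_cases i <;> simp <;> abel)
    (fun v i c x => by fin_cases i <;> simp [smul_sub])
  map_eq_zero_of_eq' v i j hv hij := by
    fin_cases i <;> fin_cases j <;>
      simp_all [hB.self_eq_zero, ← hB.neg (v 0) (v 1), ← hB.neg (v 0) (v 2), ← hB.neg (v 1) (v 2)]

/-- The Nijenhuis tensor of an endomorphism `J`, where `B` plays the role of the Lie bracket. -/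
def nijenhuis (B : M →ₗ[R] M →ₗ[R] M) (J : Module.End R M) : M →ₗ[R] M →ₗ[R] M :=
  B + (B ∘ₗ J).compr₂ J + (B.compl₂ J).compr₂ J - B.compl₁₂ J J

variable (B : M →ₗ[R] M →ₗ[R] M) (J : Module.End R M)

theorem nijenhuis_apply (x y : M) :
    nijenhuis B J x y = B x y + J (B (J x) y) + J (B x (J y)) - B (J x) (J y) := rfl

variable {B J}

theorem isAlt_nijenhuis (hB : B.IsAlt) : (nijenhuis B J).IsAlt := fun x => by
  rw [nijenhuis_apply, hB.self_eq_zero, hB.self_eq_zero, ← hB.neg x (J x), map_neg]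
  abel

theorem nijenhuis_map_left (hJ : ∀ x, J (J x) = -x) (x y : M) :
    nijenhuis B J (J x) y = -J (nijenhuis B J x y) := by
  simp only [nijenhuis_apply, hJ, map_add, map_sub, map_neg, LinearMap.neg_apply]
  abel

end General

section Frame

variable (lam α β a b r z₁ z₂ z₃ z₄ w₁ w₂ θ₁ θ₂ : ℝ)

/-- `bk` as a bilinear map. -/
def bkBilin : (Fin 4 → ℝ) →ₗ[ℝ] (Fin 4 → ℝ) →ₗ[ℝ] (Fin 4 → ℝ) :=
  LinearMap.mk₂ ℝ (bk lam α β a b r z₁ z₂ z₃ z₄ w₁ w₂ θ₁ θ₂)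
    (fun _ _ _ => by simp only [bk, Pi.add_apply]; module)
    (fun _ _ _ => by simp only [bk, Pi.smul_apply, smul_eq_mul]; module)
    (fun _ _ _ => by simp only [bk, Pi.add_apply]; module)
    (fun _ _ _ => by simp only [bk, Pi.smul_apply, smul_eq_mul]; module)

variable {lam α β a b r z₁ z₂ z₃ z₄ w₁ w₂ θ₁ θ₂} in
theorem isAlt_bkBilin : (bkBilin lam α β a b r z₁ z₂ z₃ z₄ w₁ w₂ θ₁ θ₂).IsAlt := fun E => by
  simp only [bkBilin, LinearMap.mk₂_apply, bk]
  module

/-- `Jm` as a linear map. -/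
def jmLin : Module.End ℝ (Fin 4 → ℝ) where
  toFun := Jm
  map_add' E F := by ext i; fin_cases i <;> simp [Jm] <;> ring
  map_smul' c E := by ext i; fin_cases i <;> simp [Jm]

theorem jmLin_jmLin (E : Fin 4 → ℝ) : jmLin (jmLin E) = -E := by
  ext i; fin_cases i <;> simp [jmLin, Jm]

/-- `om` as a bilinear form. -/
def omBilin : (Fin 4 → ℝ) →ₗ[ℝ] (Fin 4 → ℝ) →ₗ[ℝ] ℝ :=
  LinearMap.mk₂ ℝ om
    (fun _ _ _ => by simp [om, ip, Jm]; ring)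
    (fun _ _ _ => by simp [om, ip, Jm]; ring)
    (fun _ _ _ => by simp [om, ip, Jm]; ring)
    (fun _ _ _ => by simp [om, ip, Jm]; ring)

theorem span_single_jmLin : Submodule.span ℝ
    {Pi.single 0 1, jmLin (Pi.single 0 1), Pi.single 2 1, jmLin (Pi.single 2 1)} = ⊤ := by
  have hJX : jmLin (Pi.single 0 1) = Pi.single 1 1 := by
    ext i; fin_cases i <;> simp [jmLin, Jm]
  have hJZ : jmLin (Pi.single 2 1) = Pi.single 3 1 := by
    ext i; fin_cases i <;> simp [jmLin, Jm]
  rw [hJX, hJZ, ← (Pi.basisFun ℝ (Fin 4)).span_eq]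
  congr 1
  ext v
  simp [Fin.exists_fin_succ, eq_comm]

/-- `dom` as an alternating `3`-form. -/
def domAlternating : (Fin 4 → ℝ) [⋀^Fin 3]→ₗ[ℝ] ℝ :=
  lieExtDeriv (bkBilin lam α β a b r z₁ z₂ z₃ z₄ w₁ w₂ θ₁ θ₂) isAlt_bkBilin omBilin

theorem domAlternating_apply (v : Fin 3 → Fin 4 → ℝ) :
    domAlternating lam α β a b r z₁ z₂ z₃ z₄ w₁ w₂ θ₁ θ₂ v =
      dom lam α β a b r z₁ z₂ z₃ z₄ w₁ w₂ θ₁ θ₂ (v 0) (v 1) (v 2) := rfl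

theorem domAlternating_basisFun_succAbove (p : Fin 4) :
    domAlternating lam α β a b r z₁ z₂ z₃ z₄ w₁ w₂ θ₁ θ₂
      (Pi.basisFun ℝ (Fin 4) ∘ p.succAbove) = ![0, 0, θ₁ - 2 * a, -(θ₂ + 2 * α)] p := by
  rw [domAlternating_apply]
  fin_cases p <;> simp [Fin.succAbove, dom, om, ip, Jm, bk] <;> ring

theorem dom_eq_zero_iff :
    (∀ E F G, dom lam α β a b r z₁ z₂ z₃ z₄ w₁ w₂ θ₁ θ₂ E F G = 0) ↔
      θ₁ = 2 * a ∧ θ₂ = -2 * α := by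
  let dω := domAlternating lam α β a b r z₁ z₂ z₃ z₄ w₁ w₂ θ₁ θ₂
  calc (∀ E F G, dom lam α β a b r z₁ z₂ z₃ z₄ w₁ w₂ θ₁ θ₂ E F G = 0)
    _ ↔ dω = 0 := ⟨fun h => AlternatingMap.ext fun v => h (v 0) (v 1) (v 2),
        fun h E F G => DFunLike.congr_fun h ![E, F, G]⟩
    _ ↔ ∀ p : Fin 4, dω (Pi.basisFun ℝ (Fin 4) ∘ p.succAbove) = 0 :=
        alternatingMap_eq_zero_iff_succAbove _ _
    _ ↔ θ₁ - 2 * a = 0 ∧ -(θ₂ + 2 * α) = 0 := by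
        simp [dω, domAlternating_basisFun_succAbove, Fin.forall_fin_succ]
    _ ↔ θ₁ = 2 * a ∧ θ₂ = -2 * α := by
        rw [sub_eq_zero, neg_eq_zero, add_eq_zero_iff_eq_neg, neg_mul]

theorem nijenhuis_bkBilin_apply (E F : Fin 4 → ℝ) :
    nijenhuis (bkBilin lam α β a b r z₁ z₂ z₃ z₄ w₁ w₂ θ₁ θ₂) jmLin E F =
      NT lam α β a b r z₁ z₂ z₃ z₄ w₁ w₂ θ₁ θ₂ E F := rfl

theorem NT_single_zero_single_two :
    NT lam α β a b r z₁ z₂ z₃ z₄ w₁ w₂ θ₁ θ₂ (Pi.single 0 1) (Pi.single 2 1) =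
      ![0, 0, -(2 * z₁ - z₄ - w₂), -(2 * z₂ + z₃ + w₁)] := by
  ext i; fin_cases i <;> simp [NT, Jm, bk] <;> ring

theorem NT_eq_zero_iff :
    (∀ E F, NT lam α β a b r z₁ z₂ z₃ z₄ w₁ w₂ θ₁ θ₂ E F = 0) ↔
      2 * z₁ - z₄ - w₂ = 0 ∧ 2 * z₂ + z₃ + w₁ = 0 := by
  let N := nijenhuis (bkBilin lam α β a b r z₁ z₂ z₃ z₄ w₁ w₂ θ₁ θ₂) jmLin
  have hN_alt : N.IsAlt := isAlt_nijenhuis isAlt_bkBilin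
  have hN_antilin (E F) : N (jmLin E) F = (-jmLin) (N E F) := nijenhuis_map_left jmLin_jmLin E F
  calc (∀ E F, NT lam α β a b r z₁ z₂ z₃ z₄ w₁ w₂ θ₁ θ₂ E F = 0)
    _ ↔ N = 0 := by
        simp only [N, LinearMap.ext_iff₂, nijenhuis_bkBilin_apply, LinearMap.zero_apply]
    _ ↔ N (Pi.single 0 1) (Pi.single 2 1) = 0 :=
        eq_zero_iff_of_isAlt_of_semiconj hN_alt hN_antilin span_single_jmLin
    _ ↔ 2 * z₁ - z₄ - w₂ = 0 ∧ 2 * z₂ + z₃ + w₁ = 0 := by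
        simp [N, nijenhuis_bkBilin_apply, NT_single_zero_single_two, -neg_sub, -neg_add_rev]

end Frame

theorem kaehler_iff_general (lam α β a b r z₁ z₂ z₃ z₄ w₁ w₂ θ₁ θ₂ : ℝ) :
    ((∀ E F G : Fin 4 → ℝ, dom lam α β a b r z₁ z₂ z₃ z₄ w₁ w₂ θ₁ θ₂ E F G = 0) ∧
      (∀ E F : Fin 4 → ℝ, NT lam α β a b r z₁ z₂ z₃ z₄ w₁ w₂ θ₁ θ₂ E F = 0)) ↔
    (2 * z₁ - z₄ - w₂ = 0 ∧ 2 * z₂ + z₃ + w₁ = 0 ∧ θ₁ = 2 * a ∧ θ₂ = -2 * α) := by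
  rw [dom_eq_zero_iff, NT_eq_zero_iff, and_comm, and_assoc]

theorem kaehler_iff (lam α β a b r z₁ z₂ z₃ z₄ w₁ w₂ θ₁ θ₂ : ℝ)
    (hJac : (∀ E F G : Fin 4 → ℝ,
      bk lam α β a b r z₁ z₂ z₃ z₄ w₁ w₂ θ₁ θ₂ E (bk lam α β a b r z₁ z₂ z₃ z₄ w₁ w₂ θ₁ θ₂ F G) +
        bk lam α β a b r z₁ z₂ z₃ z₄ w₁ w₂ θ₁ θ₂ F (bk lam α β a b r z₁ z₂ z₃ z₄ w₁ w₂ θ₁ θ₂ G E) +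
        bk lam α β a b r z₁ z₂ z₃ z₄ w₁ w₂ θ₁ θ₂ G (bk lam α β a b r z₁ z₂ z₃ z₄ w₁ w₂ θ₁ θ₂ E F) = 0)) :
    ((∀ E F G : Fin 4 → ℝ, dom lam α β a b r z₁ z₂ z₃ z₄ w₁ w₂ θ₁ θ₂ E F G = 0) ∧
      (∀ E F : Fin 4 → ℝ, NT lam α β a b r z₁ z₂ z₃ z₄ w₁ w₂ θ₁ θ₂ E F = 0)) ↔
    (2 * z₁ - z₄ - w₂ = 0 ∧ 2 * z₂ + z₃ + w₁ = 0 ∧ θ₁ = 2 * a ∧ θ₂ = -2 * α) := by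
  exact kaehler_iff_general lam α β a b r z₁ z₂ z₃ z₄ w₁ w₂ θ₁ θ₂

end
end

section
/- Assume the bracket [·,·] satisfies the Jacobi identity, so that 𝔤 is a Lie algebra. Then the second fundamental form B^ℌ of the horizontal distribution vanishes identically, i.e. 𝒱(∇_U V + ∇_V U) = 0 for all U, V ∈ ℌ = span{X, Y} (equivalently, the conformal foliation tangent to 𝒱 is Riemannian), if and only if α = 0 and a = 0. -/
noncomputable section

/-- The Levi-Civita connection, via the Koszul formula
2⟨∇_E F, G⟩ = ⟨[E,F],G⟩ - ⟨[F,G],E⟩ + ⟨[G,E],F⟩ on the orthonormal basis. -/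
def grad (lam α β a b r z₁ z₂ z₃ z₄ w₁ w₂ θ₁ θ₂ : ℝ) (E F : Fin 4 → ℝ) : Fin 4 → ℝ := fun i =>
  (1 / 2) * (ip (bk lam α β a b r z₁ z₂ z₃ z₄ w₁ w₂ θ₁ θ₂ E F) (Pi.single i 1) -
    ip (bk lam α β a b r z₁ z₂ z₃ z₄ w₁ w₂ θ₁ θ₂ F (Pi.single i 1)) E + ip (bk lam α β a b r z₁ z₂ z₃ z₄ w₁ w₂ θ₁ θ₂ (Pi.single i 1) E) F)

/-- Orthogonal projection onto the vertical space span{Z, W}. -/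
def vproj (E : Fin 4 → ℝ) : Fin 4 → ℝ := ![0, 0, E 2, E 3]

/-!
By the Koszul formula and antisymmetry of the bracket,
`⟨∇_U V + ∇_V U, G⟩ = ⟨[G, U], V⟩ + ⟨[G, V], U⟩`. For vertical `G`, the horizontal part of `ad G` on
`ℌ` is a multiple of the identity plus a multiple of the rotation, and the rotation is skew, so the
right-hand side only sees the multiples `α` (for `G = Z`) and `a` (for `G = W`) of the identity.
Hence `𝒱(∇_U V + ∇_V U) = 2⟨U, V⟩(αZ + aW)` on `ℌ`.
-/

lemma ip_add_left (E F G : Fin 4 → ℝ) : ip (E + F) G = ip E G + ip F G := by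
  simp only [ip, Pi.add_apply]
  ring

lemma ip_neg_left (E F : Fin 4 → ℝ) : ip (-E) F = -ip E F := by
  simp only [ip, Pi.neg_apply]
  ring

lemma ip_single_one_right (E : Fin 4 → ℝ) (i : Fin 4) : ip E (Pi.single i 1) = E i := by
  fin_cases i <;> simp [ip]

section Connection

variable {lam α β a b r z₁ z₂ z₃ z₄ w₁ w₂ θ₁ θ₂ : ℝ}

local notation "𝔟" => bk lam α β a b r z₁ z₂ z₃ z₄ w₁ w₂ θ₁ θ₂

local notation "∇" => grad lam α β a b r z₁ z₂ z₃ z₄ w₁ w₂ θ₁ θ₂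

lemma bk_swap (E F : Fin 4 → ℝ) : 𝔟 F E = -𝔟 E F := by
  simp only [bk]
  module

-- Both sides are linear in `G`, and `grad` is defined by this formula for `G` in the basis.
lemma two_mul_ip_grad (E F G : Fin 4 → ℝ) :
    2 * ip (∇ E F) G = ip (𝔟 E F) G - ip (𝔟 F G) E + ip (𝔟 G E) F := by
  simp only [ip, grad, bk, Pi.add_apply, Pi.smul_apply, smul_eq_mul, Matrix.cons_val,
    Pi.single_apply, Fin.reduceEq, if_true, if_false]
  ring

lemma ip_grad_add_grad_swap (U V G : Fin 4 → ℝ) :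
    ip (∇ U V + ∇ V U) G = ip (𝔟 G U) V + ip (𝔟 G V) U := by
  have hUV : 2 * ip (∇ U V) G = _ := two_mul_ip_grad U V G
  have hVU : 2 * ip (∇ V U) G = _ := two_mul_ip_grad V U G
  rw [bk_swap G V, ip_neg_left] at hUV
  rw [bk_swap U V, bk_swap G U, ip_neg_left, ip_neg_left] at hVU
  rw [ip_add_left]
  linarith

variable {U V : Fin 4 → ℝ}

lemma ip_bk_add_ip_bk_swap_of_vertical_of_horizontal
    {G : Fin 4 → ℝ} (hG0 : G 0 = 0) (hG1 : G 1 = 0)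
    (hU2 : U 2 = 0) (hU3 : U 3 = 0) (hV2 : V 2 = 0) (hV3 : V 3 = 0) :
    ip (𝔟 G U) V + ip (𝔟 G V) U = 2 * ip U V * (α * G 2 + a * G 3) := by
  simp only [ip, bk, Pi.add_apply, Pi.smul_apply, smul_eq_mul, Matrix.cons_val,
    hG0, hG1, hU2, hU3, hV2, hV3]
  ring

lemma vproj_grad_add_grad_swap_of_horizontal
    (hU2 : U 2 = 0) (hU3 : U 3 = 0) (hV2 : V 2 = 0) (hV3 : V 3 = 0) :
    vproj (∇ U V + ∇ V U) = (2 * ip U V) • ![0, 0, α, a] := by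
  have hG (G : Fin 4 → ℝ) (hG0 : G 0 = 0) (hG1 : G 1 = 0) :
      ip (∇ U V + ∇ V U) G = 2 * ip U V * (α * G 2 + a * G 3) := by
    rw [ip_grad_add_grad_swap,
      ip_bk_add_ip_bk_swap_of_vertical_of_horizontal hG0 hG1 hU2 hU3 hV2 hV3]
  have hZ : (∇ U V + ∇ V U) 2 = 2 * ip U V * α := by
    simpa [ip_single_one_right, -Pi.add_apply] using hG (Pi.single 2 1) (by simp) (by simp)
  have hW : (∇ U V + ∇ V U) 3 = 2 * ip U V * a := by
    simpa [ip_single_one_right, -Pi.add_apply] using hG (Pi.single 3 1) (by simp) (by simp)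
  simp [vproj, hZ, hW, -Pi.add_apply]

theorem riemannian_iff_general :
    (∀ U V : Fin 4 → ℝ, U 2 = 0 → U 3 = 0 → V 2 = 0 → V 3 = 0 → vproj (∇ U V + ∇ V U) = 0) ↔
      α = 0 ∧ a = 0 := by
  constructor
  · intro h
    let X : Fin 4 → ℝ := Pi.single 0 1
    have hX2 : X 2 = 0 := by simp [X]
    have hX3 : X 3 = 0 := by simp [X]
    have hXX : ip X X = 1 := by simp [X, ip_single_one_right]
    have hB := h X X hX2 hX3 hX2 hX3
    rw [vproj_grad_add_grad_swap_of_horizontal hX2 hX3 hX2 hX3, hXX] at hB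
    simpa using hB
  · rintro ⟨rfl, rfl⟩ U V hU2 hU3 hV2 hV3
    rw [vproj_grad_add_grad_swap_of_horizontal hU2 hU3 hV2 hV3]
    simp

end Connection

theorem riemannian_iff (lam α β a b r z₁ z₂ z₃ z₄ w₁ w₂ θ₁ θ₂ : ℝ)
    (hJac : (∀ E F G : Fin 4 → ℝ,
      bk lam α β a b r z₁ z₂ z₃ z₄ w₁ w₂ θ₁ θ₂ E (bk lam α β a b r z₁ z₂ z₃ z₄ w₁ w₂ θ₁ θ₂ F G) +
        bk lam α β a b r z₁ z₂ z₃ z₄ w₁ w₂ θ₁ θ₂ F (bk lam α β a b r z₁ z₂ z₃ z₄ w₁ w₂ θ₁ θ₂ G E) +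
        bk lam α β a b r z₁ z₂ z₃ z₄ w₁ w₂ θ₁ θ₂ G (bk lam α β a b r z₁ z₂ z₃ z₄ w₁ w₂ θ₁ θ₂ E F) = 0)) :
    (∀ U V : Fin 4 → ℝ, U 2 = 0 → U 3 = 0 → V 2 = 0 → V 3 = 0 →
      vproj (grad lam α β a b r z₁ z₂ z₃ z₄ w₁ w₂ θ₁ θ₂ U V + grad lam α β a b r z₁ z₂ z₃ z₄ w₁ w₂ θ₁ θ₂ V U) = 0) ↔
    (α = 0 ∧ a = 0) := by
  exact riemannian_iff_general

end
end
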